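/- arXiv:1505.08096 — 4 statements merged into one kernel-verified Lean document; each statement's English description precedes it below -/
import Mathlib

section
/- Vector Gagliardo–Nirenberg inequality: Let N ≥ 4 be an integer, let p > 1 with p < N/(N-4) when N ≥ 5, and let (a_{jk})_{1≤j,k≤m} be a symmetric matrix of nonnegative real numbers. Then there exists a constant C > 0 such that for every m-tuple ψ = (ψ_1,…,ψ_m) of Schwartz functions ℝ^N → ℂ, one has P(ψ) ≤ C (Σ_{j=1}^m ‖Δψ_j‖²)^{(p-1)N/4} (Σ_{j=1}^m ‖ψ_j‖²)^{(N-p(N-4))/4}. -/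
open MeasureTheory Finset

noncomputable section

/-- Laplacian as the sum of second derivatives along the coordinate directions. -/
def lap {N : ℕ} {F : Type*} [NormedAddCommGroup F] [NormedSpace ℝ F]
    (u : EuclideanSpace ℝ (Fin N) → F) (x : EuclideanSpace ℝ (Fin N)) : F :=
  ∑ i : Fin N, iteratedFDeriv ℝ 2 u x (fun _ => EuclideanSpace.single i (1 : ℝ))


open scoped FourierTransform SchwartzMap ENNReal Pointwise

namespace GN

lemma ball_int {N : ℕ} (hN : 1 ≤ N) (b : ℝ) (hb : b < N) :
    ∃ c : ℝ, 0 ≤ c ∧ ∀ R : ℝ, 0 < R →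
      ∫⁻ x in Metric.ball (0 : EuclideanSpace ℝ (Fin N)) R, ENNReal.ofReal (‖x‖ ^ (-b))
        ≤ ENNReal.ofReal (c * R ^ ((N : ℝ) - b)) := by
  have hi : ∀ R : ℝ, IntegrableOn (fun x : EuclideanSpace ℝ (Fin N) => ‖x‖ ^ (-b))
      (Metric.ball 0 R) := by
    intro R
    apply integrableOn_ball_of_norm_le_rpow (C := 1) (α := b)
    · simpa using hb
    · refine Filter.Eventually.of_forall fun x => ?_
      simp [abs_of_nonneg (Real.rpow_nonneg (norm_nonneg x) (-b))]
    · exact (measurable_norm.pow_const _).aestronglyMeasurable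
    · simpa using hN
  refine ⟨∫ x in Metric.ball (0 : EuclideanSpace ℝ (Fin N)) 1, ‖x‖ ^ (-b), 
    integral_nonneg fun x => by positivity, fun R hR => ?_⟩
  rw [← ofReal_integral_eq_lintegral_ofReal (hi R)
    (Filter.Eventually.of_forall fun x => by positivity)]
  apply ENNReal.ofReal_le_ofReal
  have h := Measure.setIntegral_comp_smul_of_pos volume
    (fun x : EuclideanSpace ℝ (Fin N) => ‖x‖ ^ (-b)) (Metric.ball 0 1) hR
  have hball : R • Metric.ball (0 : EuclideanSpace ℝ (Fin N)) 1 = Metric.ball 0 R := by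
    rw [smul_ball hR.ne']; simp [abs_of_pos hR]
  rw [hball] at h
  simp only [norm_smul, Real.norm_eq_abs, abs_of_pos hR, finrank_euclideanSpace,
    Fintype.card_fin, smul_eq_mul] at h
  simp_rw [Real.mul_rpow hR.le (norm_nonneg _)] at h
  rw [integral_const_mul] at h
  have hR' : (0 : ℝ) < R ^ N := by positivity
  have h2 : ∫ x in Metric.ball (0 : EuclideanSpace ℝ (Fin N)) R, ‖x‖ ^ (-b)
     = R ^ N * (R ^ (-b) * ∫ x in Metric.ball (0 : EuclideanSpace ℝ (Fin N)) 1, ‖x‖ ^ (-b)) := by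
    rw [h]; field_simp
  rw [h2, sub_eq_add_neg, Real.rpow_add hR, Real.rpow_natCast]
  apply le_of_eq; ring

lemma fourierInv_bound {N : ℕ} (h : 𝓢(EuclideanSpace ℝ (Fin N), ℂ)) (x : EuclideanSpace ℝ (Fin N)) :
    ENNReal.ofReal ‖𝓕⁻ h x‖ ≤ ∫⁻ ξ, ENNReal.ofReal ‖h ξ‖ := by
  rw [← ofReal_integral_eq_lintegral_ofReal h.integrable.norm
    (Filter.Eventually.of_forall fun x => by positivity)]
  apply ENNReal.ofReal_le_ofReal
  rw [SchwartzMap.fourierInv_coe, Real.fourierInv_eq]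
  refine (norm_integral_le_integral_norm _).trans (le_of_eq ?_)
  simp

lemma sq_int {N : ℕ} (h : 𝓢(EuclideanSpace ℝ (Fin N), ℂ)) :
    Integrable (fun x => ‖h x‖ ^ 2) :=
  (h.memLp 2).integrable_norm_pow (by norm_num)

lemma plancherel {N : ℕ} (h : 𝓢(EuclideanSpace ℝ (Fin N), ℂ)) :
    ∫⁻ x, ENNReal.ofReal (‖𝓕⁻ h x‖ ^ 2) = ∫⁻ x, ENNReal.ofReal (‖h x‖ ^ 2) := by
  rw [← ofReal_integral_eq_lintegral_ofReal (sq_int _)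
    (Filter.Eventually.of_forall fun x => by positivity),
    ← ofReal_integral_eq_lintegral_ofReal (sq_int _)
    (Filter.Eventually.of_forall fun x => by positivity)]
  rw [← SchwartzMap.integral_norm_sq_fourier (𝓕⁻ h)]
  simp

/-- low frequency bound -/
lemma low {N : ℕ} (hN : 1 ≤ N) (s c R A : ℝ) (hR : 0 < R) (hc : 0 ≤ c) (hA : 0 ≤ A)
    (hb : ∫⁻ x in Metric.ball (0 : EuclideanSpace ℝ (Fin N)) R, ENNReal.ofReal (‖x‖ ^ (-(2 * s)))
        ≤ ENNReal.ofReal (c * R ^ ((N : ℝ) - 2 * s)))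
    (g : 𝓢(EuclideanSpace ℝ (Fin N), ℂ))
    (hg : ∫⁻ ξ, ENNReal.ofReal (‖ξ‖ ^ (2 * s) * ‖g ξ‖ ^ 2) ≤ ENNReal.ofReal (A ^ 2)) :
    ∫⁻ ξ in Metric.ball 0 R, ENNReal.ofReal ‖g ξ‖ ≤
      ENNReal.ofReal (c ^ (1/2 : ℝ) * R ^ ((N : ℝ) / 2 - s) * A) := by
  have hne : ∀ᵐ ξ ∂(volume.restrict (Metric.ball (0 : EuclideanSpace ℝ (Fin N)) R)),
    ENNReal.ofReal ‖g ξ‖ ≤ ENNReal.ofReal (‖ξ‖ ^ (-(2 * s))) ^ (1/2 : ℝ) *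
      ENNReal.ofReal (‖ξ‖ ^ (2 * s) * ‖g ξ‖ ^ 2) ^ (1/2 : ℝ) := by
    have : Nonempty (Fin N) := ⟨⟨0, hN⟩⟩
    have h0 : ∀ᵐ ξ ∂(volume.restrict (Metric.ball (0 : EuclideanSpace ℝ (Fin N)) R)), ξ ≠ 0 :=
      ae_restrict_of_ae (Measure.ae_ne volume 0)
    filter_upwards [h0] with ξ hξ
    have : 0 < ‖ξ‖ := norm_pos_iff.mpr hξ
    rw [← ENNReal.mul_rpow_of_nonneg _ _ (by norm_num), ← ENNReal.ofReal_mul (by positivity),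
      ← mul_assoc, ← Real.rpow_add this]
    simp only [neg_add_cancel, Real.rpow_zero, one_mul]
    rw [ENNReal.ofReal_rpow_of_nonneg (by positivity) (by norm_num), ← Real.sqrt_eq_rpow,
      Real.sqrt_sq (norm_nonneg _)]
  refine (lintegral_mono_ae hne).trans ?_
  refine (ENNReal.lintegral_mul_norm_pow_le (by fun_prop) ?_ (by norm_num) (by norm_num)
    (by norm_num)).trans ?_
  · have := g.continuous
    fun_prop
  · have h1 := (setLIntegral_le_lintegral (Metric.ball 0 R)
      fun ξ => ENNReal.ofReal (‖ξ‖ ^ (2 * s) * ‖g ξ‖ ^ 2)).trans hg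
    refine (mul_le_mul' (ENNReal.rpow_le_rpow hb (by norm_num))
      (ENNReal.rpow_le_rpow h1 (by norm_num))).trans (le_of_eq ?_)
    rw [ENNReal.ofReal_rpow_of_nonneg (by positivity) (by norm_num),
      ENNReal.ofReal_rpow_of_nonneg (by positivity) (by norm_num),
      ← ENNReal.ofReal_mul (by positivity)]
    congr 1
    rw [Real.mul_rpow hc (by positivity), ← Real.rpow_mul hR.le, ← Real.sqrt_eq_rpow (A^2),
      Real.sqrt_sq hA]
    congr 3; ring

end GN

namespace GN

lemma level {N : ℕ} (u : 𝓢(EuclideanSpace ℝ (Fin N), ℂ)) (R t : ℝ) (hR : 0 < R) (ht : 0 < t)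
    (hlow : ∫⁻ ξ in Metric.ball 0 (2 * R), ENNReal.ofReal ‖𝓕 u ξ‖ ≤ ENNReal.ofReal (t / 2)) :
    volume {x | t < ‖u x‖} ≤ ENNReal.ofReal (4 / t ^ 2) *
      ∫⁻ ξ in {ξ | R ≤ ‖ξ‖}, ENNReal.ofReal (‖𝓕 u ξ‖ ^ 2) := by
  let χ : ContDiffBump (0 : EuclideanSpace ℝ (Fin N)) := ⟨R, 2 * R, hR, by linarith⟩
  have hχ : Function.HasTemperateGrowth (fun ξ => χ ξ) :=
    χ.hasCompactSupport.hasTemperateGrowth χ.contDiff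
  set hl : 𝓢(EuclideanSpace ℝ (Fin N), ℂ) := SchwartzMap.smulLeftCLM ℂ (fun ξ => χ ξ) (𝓕 u)
    with hhl
  have hla : ∀ ξ, hl ξ = χ ξ • 𝓕 u ξ := fun ξ => SchwartzMap.smulLeftCLM_apply_apply hχ _ _
  set hh : 𝓢(EuclideanSpace ℝ (Fin N), ℂ) := 𝓕 u - hl with hhh
  have hha : ∀ ξ, hh ξ = 𝓕 u ξ - χ ξ • 𝓕 u ξ := fun ξ => by rw [← hla]; rfl
  have hsum : u = 𝓕⁻ hl + 𝓕⁻ hh := by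
    rw [← FourierTransform.fourierInv_add]
    simp [hhh]
  have hlb : ∀ x, ‖𝓕⁻ hl x‖ ≤ t / 2 := by
    intro x
    rw [← ENNReal.ofReal_le_ofReal_iff (by positivity)]
    refine (fourierInv_bound hl x).trans (le_trans ?_ hlow)
    rw [← lintegral_indicator Metric.isOpen_ball.measurableSet]
    apply lintegral_mono
    intro ξ
    by_cases hξ : ξ ∈ Metric.ball (0 : EuclideanSpace ℝ (Fin N)) (2 * R)
    · simp only [Set.indicator_of_mem hξ]
      apply ENNReal.ofReal_le_ofReal
      rw [hla, norm_smul, Real.norm_eq_abs, abs_of_nonneg χ.nonneg]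
      exact mul_le_of_le_one_left (norm_nonneg _) χ.le_one
    · simp only [Set.indicator_of_notMem hξ]
      have : χ ξ = 0 := χ.zero_of_le_dist (by simpa using hξ)
      rw [hla, this]; simp
  have hsub : {x | t < ‖u x‖} ⊆ {x | ENNReal.ofReal ((t / 2) ^ 2) ≤ ENNReal.ofReal (‖𝓕⁻ hh x‖ ^ 2)} := by
    intro x hx
    simp only [Set.mem_ofPred_eq] at hx ⊢
    apply ENNReal.ofReal_le_ofReal
    have h1 : u x = 𝓕⁻ hl x + 𝓕⁻ hh x := by
      conv_lhs => rw [hsum]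
      rfl
    have h2 := norm_add_le (𝓕⁻ hl x) (𝓕⁻ hh x)
    rw [← h1] at h2
    have := hlb x
    gcongr
    linarith
  have hch := mul_meas_ge_le_lintegral (μ := volume)
    (f := fun x => ENNReal.ofReal (‖𝓕⁻ hh x‖ ^ 2))
    (by have := (𝓕⁻ hh).continuous; fun_prop) (ENNReal.ofReal ((t / 2) ^ 2))
  have hhi : ∫⁻ x, ENNReal.ofReal (‖𝓕⁻ hh x‖ ^ 2) ≤
      ∫⁻ ξ in {ξ | R ≤ ‖ξ‖}, ENNReal.ofReal (‖𝓕 u ξ‖ ^ 2) := by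
    rw [plancherel, ← lintegral_indicator (measurableSet_le (by fun_prop) (by fun_prop))]
    apply lintegral_mono
    intro ξ
    by_cases hξ : R ≤ ‖ξ‖
    · rw [Set.indicator_of_mem (by exact hξ)]
      apply ENNReal.ofReal_le_ofReal
      gcongr
      rw [hha, ← one_smul ℝ (𝓕 u ξ), smul_smul, ← sub_smul, norm_smul, mul_one, one_smul]
      apply mul_le_of_le_one_left (norm_nonneg _)
      rw [Real.norm_eq_abs, abs_of_nonneg (by linarith [χ.le_one (x := ξ)])]
      linarith [χ.nonneg (x := ξ)]
    · rw [Set.indicator_of_notMem (by exact hξ)]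
      have : χ ξ = 1 := χ.one_of_mem_closedBall (by simpa using (not_le.mp hξ).le)
      simp [hha, this]
  have h3 := (mul_le_mul_right (measure_mono hsub) (ENNReal.ofReal ((t / 2) ^ 2))).trans (hch.trans hhi)
  calc volume {x | t < ‖u x‖} = ENNReal.ofReal (4 / t ^ 2) *
        (ENNReal.ofReal ((t / 2) ^ 2) * volume {x | t < ‖u x‖}) := by
        rw [← mul_assoc, ← ENNReal.ofReal_mul (by positivity)]
        have : 4 / t ^ 2 * (t / 2) ^ 2 = 1 := by field_simp; norm_num
        simp [this]
    _ ≤ _ := by gcongr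

lemma inner_int (q L : ℝ) (hq : 2 < q) (hL : 0 ≤ L) :
    ∫⁻ t in Set.Ioi (0 : ℝ), ENNReal.ofReal (4 * t ^ (q - 3)) * (Set.Iic L).indicator 1 t
      = ENNReal.ofReal (4 / (q - 2) * L ^ (q - 2)) := by
  have h1 : ∀ t, ENNReal.ofReal (4 * t ^ (q - 3)) * (Set.Iic L).indicator 1 t
      = (Set.Iic L).indicator (fun t => ENNReal.ofReal (4 * t ^ (q - 3))) t := by
    intro t
    by_cases h : t ∈ Set.Iic L <;> simp [h]
  simp_rw [h1]
  rw [lintegral_indicator measurableSet_Iic, Measure.restrict_restrict measurableSet_Iic,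
    Set.inter_comm, Set.Ioi_inter_Iic]
  have hint := intervalIntegral.intervalIntegrable_rpow' (a := 0) (b := L) (r := q - 3) (by linarith)
  rw [intervalIntegrable_iff_integrableOn_Ioc_of_le hL] at hint
  rw [← ofReal_integral_eq_lintegral_ofReal (hint.const_mul 4)]
  · congr 1
    rw [integral_const_mul, ← intervalIntegral.integral_of_le hL, integral_rpow (Or.inl (by linarith))]
    rw [show q - 3 + 1 = q - 2 by ring, Real.zero_rpow (by linarith)]
    ring
  · rw [Filter.EventuallyLE, ae_restrict_iff' measurableSet_Ioc]
    refine Filter.Eventually.of_forall fun t ht => ?_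
    have := ht.1
    simp only [Pi.zero_apply]; positivity

lemma sobolev {N : ℕ} (hN : 1 ≤ N) (q : ℝ) (hq : 2 < q) :
    ∃ C : ℝ, 0 ≤ C ∧ ∀ (u : 𝓢(EuclideanSpace ℝ (Fin N), ℂ)) (A : ℝ), 0 < A →
      ∫⁻ ξ, ENNReal.ofReal (‖ξ‖ ^ (N * (1 - 2 / q)) * ‖𝓕 u ξ‖ ^ 2) ≤ ENNReal.ofReal (A ^ 2) →
      ∫⁻ x, ENNReal.ofReal (‖u x‖ ^ q) ≤ ENNReal.ofReal (C * A ^ (q - 2)) *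
        ∫⁻ ξ, ENNReal.ofReal (‖ξ‖ ^ (N * (1 - 2 / q)) * ‖𝓕 u ξ‖ ^ 2) := by
  have hN' : (0 : ℝ) < N := by exact_mod_cast hN
  have hq0 : 0 < q := by linarith
  obtain ⟨s, hs⟩ : ∃ s : ℝ, s = N * (1 - 2 / q) / 2 := ⟨_, rfl⟩
  have hs2 : N * (1 - 2 / q) = 2 * s := by rw [hs]; ring
  simp only [hs2]
  set α : ℝ := N / q with hα
  have hαpos : 0 < α := by positivity
  have hαs : (N : ℝ) / 2 - s = α := by rw [hs, hα]; field_simp; ring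
  have hαq : α * (q - 2) = 2 * s := by rw [← hs2, hα]; field_simp
  obtain ⟨c, hc, hball⟩ := ball_int hN (2 * s) (by linarith)
  set K : ℝ := (c + 1) ^ (1 / 2 : ℝ) * 2 ^ α with hK
  have hKpos : 0 < K := by positivity
  refine ⟨q * (4 / (q - 2) * (2 * K) ^ (q - 2)), by
    have : 0 < q - 2 := by linarith
    positivity, fun u A hA hg => ?_⟩
  set g := 𝓕 u with hgdef
  have hgc : Continuous g := g.continuous
  have hlev : ∀ t ∈ Set.Ioi (0 : ℝ), volume {x | t < ‖u x‖} * ENNReal.ofReal (t ^ (q - 1)) ≤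
      ∫⁻ ξ, (ENNReal.ofReal (4 * t ^ (q - 3)) *
        (Set.Iic (2 * K * A * ‖ξ‖ ^ α)).indicator 1 t) * ENNReal.ofReal (‖g ξ‖ ^ 2) := by
    intro t ht
    have ht : 0 < t := ht
    set R : ℝ := (t / (2 * K * A)) ^ (1 / α) with hR
    have hRpos : 0 < R := by positivity
    have hRα : R ^ α = t / (2 * K * A) := by
      rw [hR, ← Real.rpow_mul (by positivity), one_div_mul_cancel hαpos.ne', Real.rpow_one]
    have hlow := low hN s c (2 * R) A (by positivity) hc hA.le (hball _ (by positivity)) g hg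
    have hl2 : c ^ (1/2 : ℝ) * (2 * R) ^ ((N : ℝ) / 2 - s) * A ≤ t / 2 := by
      rw [hαs, Real.mul_rpow (by norm_num) hRpos.le, hRα]
      calc c ^ (1/2 : ℝ) * (2 ^ α * (t / (2 * K * A))) * A
          ≤ (c + 1) ^ (1/2 : ℝ) * (2 ^ α * (t / (2 * K * A))) * A := by
            gcongr; linarith
        _ = K * (t / (2 * K * A)) * A := by rw [hK]; ring
        _ = t / 2 := by field_simp
    have h := level u R t hRpos ht (hlow.trans (ENNReal.ofReal_le_ofReal hl2))
    refine (mul_le_mul_left h _).trans (le_of_eq ?_)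
    rw [mul_right_comm, ← ENNReal.ofReal_mul (by positivity),
      ← lintegral_const_mul _ (by fun_prop),
      ← lintegral_indicator (measurableSet_le (by fun_prop) (by fun_prop))]
    apply lintegral_congr
    intro ξ
    have hiff : R ≤ ‖ξ‖ ↔ t ≤ 2 * K * A * ‖ξ‖ ^ α := by
      rw [← Real.rpow_le_rpow_iff hRpos.le (norm_nonneg ξ) hαpos, hRα,
        div_le_iff₀' (by positivity)]
    have hpow : 4 / t ^ 2 * t ^ (q - 1) = 4 * t ^ (q - 3) := by
      rw [show q - 1 = (q - 3) + (2 : ℕ) by push_cast; ring, Real.rpow_add ht, Real.rpow_natCast]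
      field_simp
    rw [hpow]
    by_cases hξ : R ≤ ‖ξ‖
    · rw [Set.indicator_of_mem (by exact hξ), Set.indicator_of_mem (by exact hiff.mp hξ)]
      simp [hgdef]
    · rw [Set.indicator_of_notMem (by exact hξ), Set.indicator_of_notMem (by
        exact fun h => hξ (hiff.mpr h))]
      simp
  rw [lintegral_rpow_eq_lintegral_meas_lt_mul volume
    (Filter.Eventually.of_forall fun x => norm_nonneg _)
    (by have := u.continuous; fun_prop) hq0]
  calc _ ≤ ENNReal.ofReal q * ∫⁻ t in Set.Ioi (0 : ℝ), ∫⁻ ξ, (ENNReal.ofReal (4 * t ^ (q - 3)) *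
        (Set.Iic (2 * K * A * ‖ξ‖ ^ α)).indicator 1 t) * ENNReal.ofReal (‖g ξ‖ ^ 2) := by
        refine mul_le_mul' le_rfl ?_
        exact setLIntegral_mono' measurableSet_Ioi hlev
    _ = ENNReal.ofReal q * ∫⁻ ξ, ∫⁻ t in Set.Ioi (0 : ℝ), (ENNReal.ofReal (4 * t ^ (q - 3)) *
        (Set.Iic (2 * K * A * ‖ξ‖ ^ α)).indicator 1 t) * ENNReal.ofReal (‖g ξ‖ ^ 2) := by
        congr 1
        apply lintegral_lintegral_swap
        apply Measurable.aemeasurable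
        have hm : Measurable fun z : ℝ × EuclideanSpace ℝ (Fin N) =>
            (Set.Iic (2 * K * A * ‖z.2‖ ^ α)).indicator (1 : ℝ → ℝ≥0∞) z.1 := by
          have : (fun z : ℝ × EuclideanSpace ℝ (Fin N) =>
            (Set.Iic (2 * K * A * ‖z.2‖ ^ α)).indicator (1 : ℝ → ℝ≥0∞) z.1) =
            Set.indicator {z | z.1 ≤ 2 * K * A * ‖z.2‖ ^ α} 1 := by
            ext z; simp [Set.indicator]
          rw [this]
          exact measurable_one.indicator (measurableSet_le (by fun_prop) (by fun_prop))
        simp only [Function.uncurry_def]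
        have hgm := hgc.measurable
        fun_prop
    _ = ENNReal.ofReal q * ∫⁻ ξ, ENNReal.ofReal (4 / (q - 2) * (2 * K * A * ‖ξ‖ ^ α) ^ (q - 2))
          * ENNReal.ofReal (‖g ξ‖ ^ 2) := by
        congr 1
        apply lintegral_congr
        intro ξ
        rw [lintegral_mul_const' _ _ ENNReal.ofReal_ne_top, inner_int q _ hq (by positivity)]
    _ ≤ _ := by
        have hq2 : 0 < q - 2 := by linarith
        rw [← lintegral_const_mul' _ _ ENNReal.ofReal_ne_top,
          ← lintegral_const_mul' _ _ ENNReal.ofReal_ne_top]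
        apply le_of_eq
        apply lintegral_congr
        intro ξ
        rw [← ENNReal.ofReal_mul (by positivity), ← ENNReal.ofReal_mul (by positivity),
          ← ENNReal.ofReal_mul (by positivity)]
        congr 1
        rw [Real.mul_rpow (by positivity) (by positivity), Real.mul_rpow (by positivity) hA.le,
          ← Real.rpow_mul (norm_nonneg _), hαq]
        ring

end GN

namespace GN

open Laplacian in
lemma lap_eq {N : ℕ} (u : 𝓢(EuclideanSpace ℝ (Fin N), ℂ)) (x : EuclideanSpace ℝ (Fin N)) :
    lap (⇑u) x = (Δ u) x := by
  rw [SchwartzMap.laplacian_apply,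
    InnerProductSpace.laplacian_eq_iteratedFDeriv_orthonormalBasis _
      (EuclideanSpace.basisFun (Fin N) ℝ)]
  unfold lap
  refine Finset.sum_congr rfl fun i _ => ?_
  congr 1
  ext j
  fin_cases j <;> simp

lemma lap_fourier {N : ℕ} (u : 𝓢(EuclideanSpace ℝ (Fin N), ℂ)) :
    ∫⁻ ξ, ENNReal.ofReal (‖ξ‖ ^ 4 * ‖𝓕 u ξ‖ ^ 2) ≤ ENNReal.ofReal (∫ x, ‖lap (⇑u) x‖ ^ 2) := by
  set w : 𝓢(EuclideanSpace ℝ (Fin N), ℂ) :=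
    SchwartzMap.smulLeftCLM ℂ (fun ξ : EuclideanSpace ℝ (Fin N) => ‖ξ‖ ^ 2) (𝓕 u) with hw
  have hwa : ∀ ξ, w ξ = (‖ξ‖ ^ 2) • 𝓕 u ξ := fun ξ =>
    SchwartzMap.smulLeftCLM_apply_apply (by fun_prop) _ _
  have h1 : ∫⁻ ξ, ENNReal.ofReal (‖ξ‖ ^ 4 * ‖𝓕 u ξ‖ ^ 2) = ENNReal.ofReal (∫ x, ‖𝓕⁻ w x‖ ^ 2) := by
    rw [ofReal_integral_eq_lintegral_ofReal (sq_int _)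
      (Filter.Eventually.of_forall fun x => by positivity), plancherel]
    apply lintegral_congr
    intro ξ
    congr 1
    rw [hwa, norm_smul, mul_pow, Real.norm_eq_abs, abs_of_nonneg (by positivity)]
    ring
  rw [h1]
  apply ENNReal.ofReal_le_ofReal
  have h2 : ∀ x, ‖lap (⇑u) x‖ ^ 2 = (2 * Real.pi) ^ 4 * ‖𝓕⁻ w x‖ ^ 2 := by
    intro x
    rw [lap_eq, SchwartzMap.laplacian_eq_fourierMultiplierCLM, SchwartzMap.fourierMultiplierCLM_apply]
    change ‖(-(2 * Real.pi) ^ 2) • (𝓕⁻ w x)‖ ^ 2 = _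
    rw [norm_smul, mul_pow, norm_neg, Real.norm_eq_abs, abs_of_nonneg (by positivity)]
    ring
  simp_rw [h2]
  rw [integral_const_mul]
  refine le_mul_of_one_le_left (integral_nonneg fun x => by positivity) ?_
  apply one_le_pow₀
  linarith [Real.pi_gt_three]

lemma scalar {N : ℕ} (hN : 1 ≤ N) (p : ℝ) (hp : 1 < p) (hpN : p * ((N : ℝ) - 4) ≤ N) :
    ∃ C : ℝ, 0 ≤ C ∧ ∀ u : 𝓢(EuclideanSpace ℝ (Fin N), ℂ),
      ∫ x, ‖u x‖ ^ (2 * p) ≤ C * (∫ x, ‖lap (⇑u) x‖ ^ 2) ^ ((p - 1) * (N : ℝ) / 4) *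
        (∫ x, ‖u x‖ ^ 2) ^ (((N : ℝ) - p * ((N : ℝ) - 4)) / 4) := by
  obtain ⟨C, hC, hS⟩ := sobolev hN (2 * p) (by linarith)
  refine ⟨C, hC, fun u => ?_⟩
  set D := ∫ x, ‖lap (⇑u) x‖ ^ 2 with hD
  set M := ∫ x, ‖u x‖ ^ 2 with hM
  have hD0 : 0 ≤ D := integral_nonneg fun x => by positivity
  have hM0 : 0 ≤ M := integral_nonneg fun x => by positivity
  have hp0 : 0 < p := by linarith
  have hN' : (0 : ℝ) < N := by exact_mod_cast hN
  obtain ⟨θ, hθ⟩ : ∃ θ : ℝ, θ = N * (1 - 2 / (2 * p)) / 4 := ⟨_, rfl⟩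
  have hθσ : N * (1 - 2 / (2 * p)) = 4 * θ := by rw [hθ]; ring
  have hθp : θ * p = (p - 1) * N / 4 := by rw [hθ]; field_simp
  have hθp' : (1 - θ) * p = ((N : ℝ) - p * ((N : ℝ) - 4)) / 4 := by
    rw [sub_mul, hθp]; ring
  have hθ0 : 0 ≤ θ := by
    have : 0 ≤ θ * p := by
      rw [hθp]
      have : 0 < p - 1 := by linarith
      positivity
    exact nonneg_of_mul_nonneg_left this hp0
  have hθ1 : 0 ≤ 1 - θ := by
    have : 0 ≤ (1 - θ) * p := by rw [hθp']; linarith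
    exact nonneg_of_mul_nonneg_left this hp0
  rw [hθσ] at hS
  have hMl : ∫⁻ ξ, ENNReal.ofReal (‖𝓕 u ξ‖ ^ 2) = ENNReal.ofReal M := by
    rw [← ofReal_integral_eq_lintegral_ofReal (sq_int _)
      (Filter.Eventually.of_forall fun x => by positivity), SchwartzMap.integral_norm_sq_fourier]
  set B := D ^ θ * M ^ (1 - θ) with hB
  have hB0 : 0 ≤ B := by positivity
  have hI : ∫⁻ ξ, ENNReal.ofReal (‖ξ‖ ^ (4 * θ) * ‖𝓕 u ξ‖ ^ 2) ≤ ENNReal.ofReal B := by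
    have hc := (𝓕 u).continuous
    have h := ENNReal.lintegral_mul_norm_pow_le (μ := volume)
      (f := fun ξ => ENNReal.ofReal (‖ξ‖ ^ 4 * ‖𝓕 u ξ‖ ^ 2))
      (g := fun ξ => ENNReal.ofReal (‖𝓕 u ξ‖ ^ 2)) (by fun_prop) (by fun_prop) hθ0 hθ1 (by ring)
    rw [hMl] at h
    have h2 := h.trans (mul_le_mul' (ENNReal.rpow_le_rpow (lap_fourier u) hθ0) le_rfl)
    rw [ENNReal.ofReal_rpow_of_nonneg hD0 hθ0, ENNReal.ofReal_rpow_of_nonneg hM0 hθ1,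
      ← ENNReal.ofReal_mul (by positivity)] at h2
    refine le_trans (le_of_eq (lintegral_congr fun ξ => ?_)) h2
    rw [ENNReal.ofReal_rpow_of_nonneg (by positivity) hθ0,
      ENNReal.ofReal_rpow_of_nonneg (by positivity) hθ1, ← ENNReal.ofReal_mul (by positivity)]
    congr 1
    rw [Real.mul_rpow (by positivity) (by positivity), mul_assoc,
      ← Real.rpow_add_of_nonneg (by positivity) hθ0 hθ1, add_sub_cancel, Real.rpow_one,
      ← Real.rpow_natCast ‖ξ‖ 4, ← Real.rpow_mul (norm_nonneg _)]
    norm_num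
  have hfin : ∫⁻ x, ENNReal.ofReal (‖u x‖ ^ (2 * p)) ≤ ENNReal.ofReal (C * B ^ p) := by
    rcases hB0.eq_or_lt with h0 | h0
    · rw [← h0] at hI ⊢
      have hI0 : ∫⁻ ξ, ENNReal.ofReal (‖ξ‖ ^ (4 * θ) * ‖𝓕 u ξ‖ ^ 2) = 0 := by simpa using hI
      have := hS u 1 one_pos (by rw [hI0]; exact zero_le)
      rw [hI0, mul_zero] at this
      exact this.trans zero_le
    · have := hS u (B ^ (1 / 2 : ℝ)) (by positivity) (by
        rw [← Real.sqrt_eq_rpow, Real.sq_sqrt hB0]; exact hI)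
      refine (this.trans (mul_le_mul' le_rfl hI)).trans (le_of_eq ?_)
      rw [← ENNReal.ofReal_mul (by positivity), ← Real.rpow_mul hB0, mul_assoc]
      congr 2
      nth_rewrite 2 [← Real.rpow_one B]
      rw [← Real.rpow_add h0]
      congr 1; ring
  have hCB : C * B ^ p = C * D ^ ((p - 1) * (N : ℝ) / 4) *
      M ^ (((N : ℝ) - p * ((N : ℝ) - 4)) / 4) := by
    rw [hB, Real.mul_rpow (by positivity) (by positivity), ← Real.rpow_mul hD0,
      ← Real.rpow_mul hM0, hθp, hθp', mul_assoc]
  rw [← hCB, integral_eq_lintegral_of_nonneg_ae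
    (Filter.Eventually.of_forall fun x => by positivity)
    (by have := u.continuous; exact (by fun_prop : Measurable _).aestronglyMeasurable)]
  exact ENNReal.toReal_le_of_le_ofReal (by positivity) hfin

end GN

/-- **Vector Gagliardo–Nirenberg inequality.** -/
theorem vector_gagliardo_nirenberg (N m : ℕ) (hN : 4 ≤ N) (p : ℝ) (hp : 1 < p)
    (hpN : 5 ≤ N → p < (N : ℝ) / ((N : ℝ) - 4))
    (a : Fin m → Fin m → ℝ) (hsymm : ∀ j k, a j k = a k j)
    (hnonneg : ∀ j k, 0 ≤ a j k) :
    ∃ C : ℝ, 0 < C ∧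
      ∀ ψ : Fin m → SchwartzMap (EuclideanSpace ℝ (Fin N)) ℂ,
        (1 / (2 * p)) * ∑ j, ∑ k, a j k * ∫ x, ‖ψ j x‖ ^ p * ‖ψ k x‖ ^ p ≤
          C * (∑ j, ∫ x, ‖lap (⇑(ψ j)) x‖ ^ 2) ^ ((p - 1) * (N : ℝ) / 4) *
            (∑ j, ∫ x, ‖ψ j x‖ ^ 2) ^ (((N : ℝ) - p * ((N : ℝ) - 4)) / 4) := by
  have hp0 : 0 < p := by linarith
  have hpN' : p * ((N : ℝ) - 4) ≤ N := by
    rcases hN.eq_or_lt with h | h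
    · rw [← h]; norm_num
    · have h5 : (5 : ℝ) ≤ N := by exact_mod_cast h
      have := hpN h
      rw [lt_div_iff₀ (by linarith)] at this
      exact this.le
  obtain ⟨C, hC, hs⟩ := GN.scalar (N := N) (by omega) p hp hpN'
  have hS0 : 0 ≤ ∑ j, ∑ k, a j k := Finset.sum_nonneg fun j _ => Finset.sum_nonneg fun k _ => hnonneg j k
  refine ⟨(1 / (2 * p)) * (∑ j, ∑ k, a j k) * C + 1, by positivity, fun ψ => ?_⟩
  set D := ∑ j, ∫ x, ‖lap (⇑(ψ j)) x‖ ^ 2 with hD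
  set M := ∑ j, ∫ x, ‖ψ j x‖ ^ 2 with hM
  have hDj : ∀ j, 0 ≤ ∫ x, ‖lap (⇑(ψ j)) x‖ ^ 2 := fun j => integral_nonneg fun x => by positivity
  have hMj : ∀ j, 0 ≤ ∫ x, ‖ψ j x‖ ^ 2 := fun j => integral_nonneg fun x => by positivity
  have hD0 : 0 ≤ D := Finset.sum_nonneg fun j _ => hDj j
  have hM0 : 0 ≤ M := Finset.sum_nonneg fun j _ => hMj j
  have he1 : 0 ≤ (p - 1) * (N : ℝ) / 4 := by
    have : 0 < p - 1 := by linarith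
    positivity
  have he2 : 0 ≤ ((N : ℝ) - p * ((N : ℝ) - 4)) / 4 := by linarith
  set X := D ^ ((p - 1) * (N : ℝ) / 4) * M ^ (((N : ℝ) - p * ((N : ℝ) - 4)) / 4) with hX
  have hX0 : 0 ≤ X := by positivity
  have hj : ∀ j, ∫ x, ‖ψ j x‖ ^ (2 * p) ≤ C * X := by
    intro j
    refine (hs (ψ j)).trans ?_
    rw [mul_assoc]
    refine mul_le_mul_of_nonneg_left (mul_le_mul ?_ ?_ (Real.rpow_nonneg (hMj j) _) (by positivity)) hC
    · exact Real.rpow_le_rpow (hDj j) (Finset.single_le_sum (f := fun j => ∫ x, ‖lap (⇑(ψ j)) x‖ ^ 2) (fun j _ => hDj j) (Finset.mem_univ j)) he1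
    · exact Real.rpow_le_rpow (hMj j) (Finset.single_le_sum (f := fun j => ∫ x, ‖ψ j x‖ ^ 2) (fun j _ => hMj j) (Finset.mem_univ j)) he2
  have hint : ∀ j, Integrable fun x => ‖ψ j x‖ ^ (2 * p) := by
    intro j
    have := ((ψ j).memLp (ENNReal.ofReal (2 * p))).integrable_norm_rpow
      (by simp [hp0]) ENNReal.ofReal_ne_top
    rwa [ENNReal.toReal_ofReal (by positivity)] at this
  have hjk : ∀ j k, ∫ x, ‖ψ j x‖ ^ p * ‖ψ k x‖ ^ p ≤ C * X := by
    intro j k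
    have h1 : ∫ x, ‖ψ j x‖ ^ p * ‖ψ k x‖ ^ p ≤
        ∫ x, (1 / 2 : ℝ) * (‖ψ j x‖ ^ (2 * p) + ‖ψ k x‖ ^ (2 * p)) := by
      apply integral_mono_of_nonneg (Filter.Eventually.of_forall fun x => by positivity)
        (((hint j).add (hint k)).const_mul _)
      refine Filter.Eventually.of_forall fun x => ?_
      have e : ∀ y : ℝ, 0 ≤ y → y ^ (2 * p) = (y ^ p) ^ 2 := fun y hy => by
        rw [mul_comm, Real.rpow_mul hy]; norm_cast
      simp only [e _ (norm_nonneg _), Pi.add_apply]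
      nlinarith [sq_nonneg (‖ψ j x‖ ^ p - ‖ψ k x‖ ^ p)]
    rw [integral_const_mul, integral_add (hint j) (hint k)] at h1
    linarith [hj j, hj k]
  calc (1 / (2 * p)) * ∑ j, ∑ k, a j k * ∫ x, ‖ψ j x‖ ^ p * ‖ψ k x‖ ^ p
      ≤ (1 / (2 * p)) * ∑ j, ∑ k, a j k * (C * X) := by
        refine mul_le_mul_of_nonneg_left ?_ (by positivity)
        exact Finset.sum_le_sum fun j _ => Finset.sum_le_sum fun k _ =>
          mul_le_mul_of_nonneg_left (hjk j k) (hnonneg j k)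
    _ = (1 / (2 * p)) * (∑ j, ∑ k, a j k) * C * X := by
        simp_rw [← Finset.sum_mul]; ring
    _ ≤ ((1 / (2 * p)) * (∑ j, ∑ k, a j k) * C + 1) * X := by nlinarith
    _ = _ := by rw [hX]; ring
end
end

section
/- Pohozaev-type norm identities for solutions: Let N ≥ 4 be an integer, p > 1, and (a_{jk})_{1≤j,k≤m} a symmetric matrix of real numbers. Suppose Ψ = (ψ_1,…,ψ_m) is an m-tuple of Schwartz functions ℝ^N → ℂ solving Δ²ψ_j + ψ_j = Σ_{k=1}^m a_{jk} |ψ_k|^p |ψ_j|^{p-2} ψ_j pointwise on ℝ^N for each j. Set Q := Σ_{j,k=1}^m a_{jk} ∫_{ℝ^N} |ψ_j ψ_k|^p dx. Then Σ_{j=1}^m ‖ψ_j‖² = (1 − N/4 + N/(4p)) Q and Σ_{j=1}^m ‖Δψ_j‖² = (N(p-1)/(4p)) Q. -/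
open MeasureTheory Finset

noncomputable section

open scoped SchwartzMap LineDeriv Laplacian

namespace Poho

abbrev E (N : ℕ) := EuclideanSpace ℝ (Fin N)

variable {N : ℕ}

abbrev e (i : Fin N) : E N := EuclideanSpace.single i (1 : ℝ)

/-- Multiplication by a coordinate. -/
def X (i : Fin N) : 𝓢(E N, ℂ) →L[ℝ] 𝓢(E N, ℂ) :=
  SchwartzMap.smulLeftCLM ℂ (fun x : E N => (EuclideanSpace.proj i : E N →L[ℝ] ℝ) x)

lemma X_apply (i : Fin N) (f : 𝓢(E N, ℂ)) (x : E N) : X i f x = (x i) • f x := by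
  have h : (fun x : E N => (EuclideanSpace.proj i : E N →L[ℝ] ℝ) x).HasTemperateGrowth := by
    fun_prop
  rw [X, SchwartzMap.smulLeftCLM_apply_apply h]
  rfl

lemma lapS_eq (f : 𝓢(E N, ℂ)) : Δ f = ∑ i : Fin N, ∂_{e i} (∂_{e i} f) := by
  rw [SchwartzMap.laplacian_eq_sum (EuclideanSpace.basisFun (Fin N) ℝ)]
  simp

lemma lap_eq (f : 𝓢(E N, ℂ)) : lap (⇑f) = ⇑(Δ f : 𝓢(E N, ℂ)) := by
  ext x
  rw [lapS_eq, _root_.sum_apply, lap]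
  refine Finset.sum_congr rfl fun i _ => ?_
  rw [← SchwartzMap.iteratedLineDerivOp_eq_iteratedFDeriv]
  simp [LineDeriv.iteratedLineDerivOp_succ_left, Fin.tail]

lemma d_comm (v w : E N) (f : 𝓢(E N, ℂ)) : ∂_{v} (∂_{w} f) = ∂_{w} (∂_{v} f) := by
  have key : ∀ (v w x : E N), ∂_{v} (∂_{w} f) x = fderiv ℝ (fderiv ℝ f) x v w := by
    intro v w x
    rw [SchwartzMap.lineDerivOp_apply_eq_fderiv]
    have h1 : (⇑(∂_{w} f : 𝓢(E N, ℂ))) = fun y => fderiv ℝ f y w := by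
      ext y; rfl
    have h2 : DifferentiableAt ℝ (fderiv ℝ f) x :=
      (((f.smooth 2).fderiv_right (m := 1) (by norm_num)).differentiable (by norm_num)) x
    rw [h1, fderiv_clm_apply h2 (differentiableAt_const w)]
    simp
  ext x
  rw [key, key]
  have := (f.smooth 2).contDiffAt (x := x) |>.isSymmSndFDerivAt (by simp)
  exact this v w

lemma d_X (i : Fin N) (v : E N) (f : 𝓢(E N, ℂ)) :
    ∂_{v} (X i f) = (v i) • f + X i (∂_{v} f) := by
  ext x
  rw [SchwartzMap.lineDerivOp_apply_eq_fderiv]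
  have h1 : (⇑(X i f) : E N → ℂ) = fun y => ((EuclideanSpace.proj i : E N →L[ℝ] ℝ) y) • f y := by
    ext y; exact X_apply i f y
  rw [h1, fderiv_fun_smul (by fun_prop) f.differentiableAt,
    ContinuousLinearMap.fderiv]
  simp [X_apply, SchwartzMap.lineDerivOp_apply_eq_fderiv, add_comm]

/-- The dilation generator. -/
def dil (f : 𝓢(E N, ℂ)) : 𝓢(E N, ℂ) := ∑ i, X i (∂_{e i} f)

lemma sum_e (x : E N) : ∑ i, x i • e i = x := by
  ext k
  simp [Finset.sum_apply, Pi.single_apply]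

lemma dil_apply (f : 𝓢(E N, ℂ)) (x : E N) : dil f x = fderiv ℝ f x x := by
  rw [dil, _root_.sum_apply]
  conv_rhs => rw [← sum_e x, map_sum]
  refine Finset.sum_congr rfl fun i _ => ?_
  rw [X_apply, SchwartzMap.lineDerivOp_apply_eq_fderiv, map_smul, sum_e]

lemma lapS_X (i : Fin N) (f : 𝓢(E N, ℂ)) : Δ (X i f) = (2:ℝ) • ∂_{e i} f + X i (Δ f) := by
  have h : ∀ k, ∂_{e k} (∂_{e k} (X i f)) =
      (2:ℝ) • (if i = k then ∂_{e i} f else 0) + X i (∂_{e k} (∂_{e k} f)) := by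
    intro k
    rw [d_X, LineDeriv.lineDerivOp_add, d_X, LineDeriv.lineDerivOp_smul]
    by_cases h : i = k
    · subst h
      simp [two_smul, add_assoc]
    · simp [h]
  rw [lapS_eq, lapS_eq, Finset.sum_congr rfl fun k _ => h k, Finset.sum_add_distrib, map_sum,
    ← Finset.smul_sum]
  simp

lemma lapS_sum {ι : Type*} (s : Finset ι) (g : ι → 𝓢(E N, ℂ)) :
    Δ (∑ i ∈ s, g i) = ∑ i ∈ s, Δ (g i) := by
  simp only [← SchwartzMap.laplacianCLM_eq', map_sum]

lemma lapS_dil (f : 𝓢(E N, ℂ)) : Δ (dil f) = (2:ℝ) • Δ f + dil (Δ f) := by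
  rw [dil, lapS_sum]
  simp only [lapS_X]
  rw [Finset.sum_add_distrib, ← Finset.smul_sum, ← lapS_eq, dil]
  congr 1
  refine Finset.sum_congr rfl fun i _ => ?_
  congr 1
  rw [lapS_eq, lapS_eq, LineDeriv.lineDerivOp_sum]
  refine Finset.sum_congr rfl fun k _ => ?_
  rw [d_comm (e k) (e i) f, d_comm (e k) (e i)]

structure Good (f : E N → ℝ) : Prop where
  diff : Differentiable ℝ f
  bdd : ∃ C, ∀ x, ‖f x‖ ≤ C
  int0 : Integrable f
  int1 : Integrable (fun x => ‖x‖ * ‖f x‖)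
  intd : Integrable (fun x => ‖x‖ * ‖fderiv ℝ f x‖)

lemma Good.int_mul {f g : E N → ℝ} (hf : Good f) (hg : Good g) :
    Integrable (fun x => g x * fderiv ℝ f x x) := by
  obtain ⟨C, hC⟩ := hg.bdd
  refine (hf.intd.const_mul C).mono' ?_ ?_
  · refine hg.diff.continuous.aestronglyMeasurable.mul ?_
    have : Measurable fun x : E N => fderiv ℝ f x x :=
      ((measurable_fderiv ℝ f).prodMk measurable_id : Measurable fun x => (fderiv ℝ f x, x)) |>
        (show Measurable (fun q : (E N →L[ℝ] ℝ) × E N => q.1 q.2) from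
          (isBoundedBilinearMap_apply.continuous.measurable)).comp
    exact this.aestronglyMeasurable
  · refine Filter.Eventually.of_forall fun x => ?_
    rw [norm_mul, mul_comm ‖x‖]
    have := (norm_nonneg _).trans (hC x)
    gcongr
    · exact hC x
    · exact (fderiv ℝ f x).le_opNorm x

lemma Good.mul {f g : E N → ℝ} (hf : Good f) (hg : Good g) : Good (fun x => f x * g x) := by
  obtain ⟨C, hC⟩ := hf.bdd
  obtain ⟨D, hD⟩ := hg.bdd
  have hC0 : 0 ≤ C := (norm_nonneg _).trans (hC 0)
  have hD0 : 0 ≤ D := (norm_nonneg _).trans (hD 0)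
  have hd : Differentiable ℝ (fun x => f x * g x) := hf.diff.mul hg.diff
  refine ⟨hd, ⟨C * D, fun x => ?_⟩, ?_, ?_, ?_⟩
  · rw [norm_mul]; gcongr; exacts [hC x, hD x]
  · refine (hg.int0.norm.const_mul C).mono' hd.continuous.aestronglyMeasurable ?_
    refine Filter.Eventually.of_forall fun x => ?_
    rw [norm_mul]; gcongr; exact hC x
  · refine (hg.int1.const_mul C).mono'
      (continuous_norm.mul hd.continuous.norm).aestronglyMeasurable ?_
    refine Filter.Eventually.of_forall fun x => ?_
    rw [norm_mul, norm_norm, norm_norm, norm_mul, mul_left_comm]; gcongr; exact hC x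
  · refine ((hg.intd.const_mul C).add (hf.intd.const_mul D)).mono'
      (continuous_norm.measurable.mul (measurable_fderiv ℝ _).norm).aestronglyMeasurable ?_
    refine Filter.Eventually.of_forall fun x => ?_
    rw [norm_mul, norm_norm, norm_norm, fderiv_fun_mul (hf.diff x) (hg.diff x)]
    calc ‖x‖ * ‖f x • fderiv ℝ g x + g x • fderiv ℝ f x‖
        ≤ ‖x‖ * (C * ‖fderiv ℝ g x‖ + D * ‖fderiv ℝ f x‖) := by
          gcongr
          refine (norm_add_le _ _).trans ?_
          rw [norm_smul, norm_smul]
          gcongr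
          exacts [hC x, hD x]
      _ = _ := by simp only [Pi.add_apply]; ring

lemma Good.rpow (u : 𝓢(E N, ℂ)) {p : ℝ} (hp : 1 < p) : Good (fun x => ‖u x‖ ^ p) := by
  obtain ⟨C, hC⟩ : ∃ C, ∀ x, ‖u x‖ ≤ C :=
    ⟨_, fun x => SchwartzMap.norm_le_seminorm ℝ u x⟩
  have hC0 : 0 ≤ C := (norm_nonneg _).trans (hC 0)
  have hpow : ∀ x, ‖u x‖ ^ (p - 1) ≤ C ^ (p - 1) := fun x =>
    Real.rpow_le_rpow (norm_nonneg _) (hC x) (by linarith)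
  have hp1 : ∀ x, ‖u x‖ ^ p ≤ C ^ (p - 1) * ‖u x‖ := by
    intro x
    have : ‖u x‖ ^ p = ‖u x‖ ^ (p - 1) * ‖u x‖ := by
      rw [← Real.rpow_add_one' (norm_nonneg _) (by linarith)]; ring_nf
    rw [this]; gcongr ?_ * _; exact hpow x
  have hd : Differentiable ℝ (fun x => ‖u x‖ ^ p) :=
    (differentiable_norm_rpow hp).comp u.differentiable
  have hn : ∀ x, ‖‖u x‖ ^ p‖ = ‖u x‖ ^ p := fun x => by
    rw [Real.norm_of_nonneg (by positivity)]
  refine ⟨hd, ⟨C ^ p, fun x => ?_⟩, ?_, ?_, ?_⟩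
  · rw [hn]; exact Real.rpow_le_rpow (norm_nonneg _) (hC x) (by linarith)
  · refine (u.integrable.norm.const_mul (C ^ (p-1))).mono' hd.continuous.aestronglyMeasurable ?_
    refine Filter.Eventually.of_forall fun x => ?_
    rw [hn]; exact hp1 x
  · refine ((u.integrable_pow_mul volume 1).const_mul (C ^ (p-1))).mono'
      (continuous_norm.mul hd.continuous.norm).aestronglyMeasurable ?_
    refine Filter.Eventually.of_forall fun x => ?_
    rw [norm_mul, norm_norm, norm_norm, hn, pow_one, mul_left_comm]; gcongr; exact hp1 x
  · refine (((SchwartzMap.fderivCLM ℝ _ _ u).integrable_pow_mul volume 1).const_mul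
      (p * C ^ (p-1))).mono'
      (continuous_norm.measurable.mul (measurable_fderiv ℝ _).norm).aestronglyMeasurable ?_
    refine Filter.Eventually.of_forall fun x => ?_
    rw [norm_mul, norm_norm, norm_norm, pow_one, mul_left_comm, SchwartzMap.fderivCLM_apply]
    gcongr
    refine (norm_fderiv_norm_rpow_le u.differentiable hp).trans ?_
    gcongr p * ?_ * _
    exact hpow x

lemma Good.int_dil {f : E N → ℝ} (hf : Good f) : Integrable (fun x => fderiv ℝ f x x) := by
  refine hf.intd.mono' ?_ (Filter.Eventually.of_forall fun x => ?_)
  · have : Measurable fun x : E N => fderiv ℝ f x x :=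
      ((measurable_fderiv ℝ f).prodMk measurable_id : Measurable fun x => (fderiv ℝ f x, x)) |>
        (show Measurable (fun q : (E N →L[ℝ] ℝ) × E N => q.1 q.2) from
          (isBoundedBilinearMap_apply.continuous.measurable)).comp
    exact this.aestronglyMeasurable
  · rw [mul_comm]; exact (fderiv ℝ f x).le_opNorm x

lemma Good.integral {f : E N → ℝ} (hf : Good f) :
    ∫ x, fderiv ℝ f x x = - (N : ℝ) * ∫ x, f x := by
  have hx : ∀ (x : E N) i, ‖x i‖ ≤ ‖x‖ := fun x i => PiLp.norm_apply_le x i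
  have hI : ∀ i : Fin N, Integrable (fun x : E N => fderiv ℝ f x (e i) * x i) := by
    intro i
    refine hf.intd.mono' ?_ (Filter.Eventually.of_forall fun x => ?_)
    · exact ((measurable_fderiv_apply_const ℝ f (e i)).mul
        (EuclideanSpace.proj i : E N →L[ℝ] ℝ).continuous.measurable).aestronglyMeasurable
    · rw [norm_mul, mul_comm]
      gcongr
      · exact hx x i
      · simpa using (fderiv ℝ f x).le_opNorm (e i)
  have hpr : ∀ (i : Fin N) (x : E N),
      fderiv ℝ (fun x : E N => (EuclideanSpace.proj i : E N →L[ℝ] ℝ) x) x (e i) = 1 := by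
    intro i x
    rw [ContinuousLinearMap.fderiv]; simp
  have h : ∀ i : Fin N, ∫ x : E N, fderiv ℝ f x (e i) * x i = - ∫ x, f x := by
    intro i
    have := integral_mul_fderiv_eq_neg_fderiv_mul_of_integrable (μ := (volume : Measure (E N)))
      (f := f) (g := fun x : E N => (EuclideanSpace.proj i : E N →L[ℝ] ℝ) x) (v := e i)
      (hI i) ?_ ?_ (fun x _ => hf.diff x) (fun x _ => by fun_prop)
    · simp only [hpr, mul_one] at this
      rw [this, neg_neg]; rfl
    · simpa only [hpr, mul_one] using hf.int0
    · refine hf.int1.mono' ?_ (Filter.Eventually.of_forall fun x => ?_)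
      · exact (hf.diff.continuous.mul (by fun_prop)).aestronglyMeasurable
      · rw [norm_mul, mul_comm]
        gcongr
        exact hx x i
  have h2 : ∀ x : E N, fderiv ℝ f x x = ∑ i, fderiv ℝ f x (e i) * x i := by
    intro x
    conv_lhs => rw [← sum_e x, map_sum]
    refine Finset.sum_congr rfl fun i _ => ?_
    rw [map_smul, sum_e, smul_eq_mul, mul_comm]
  simp_rw [h2]
  rw [integral_finsetSum _ fun i _ => hI i]
  simp [h]

lemma fderiv_rpow (u : 𝓢(E N, ℂ)) {p : ℝ} (hp : 1 < p) (x : E N) :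
    fderiv ℝ (fun x => ‖u x‖ ^ p) x x = p * ‖u x‖ ^ (p - 2) * inner ℝ (u x) (dil u x) := by
  rw [u.differentiable.fderiv_norm_rpow hp, dil_apply]
  simp

lemma integrable_inner (u v : 𝓢(E N, ℂ)) : Integrable (fun x => inner ℝ (u x) (v x)) :=
  (SchwartzMap.pairing (innerSL ℝ) u v).integrable

lemma inner_dil_self (u : 𝓢(E N, ℂ)) :
    ∫ x, inner ℝ (u x) (dil u x) = - ((N : ℝ) / 2) * ∫ x, ‖u x‖ ^ 2 := by
  have h := (Good.rpow u (p := 2) (by norm_num)).integral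
  simp only [fderiv_rpow u (p := 2) (by norm_num)] at h
  simp only [sub_self, Real.rpow_zero, mul_one, integral_const_mul, Real.rpow_two] at h
  linarith

lemma inner_lap (u v : 𝓢(E N, ℂ)) :
    ∫ x, inner ℝ (u x) (Δ v x) = ∫ x, inner ℝ (Δ u x) (v x) :=
  SchwartzMap.integral_bilinear_laplacian_right_eq_left u v (innerSL ℝ)

lemma inner_bilap_self (u : 𝓢(E N, ℂ)) :
    ∫ x, inner ℝ (Δ (Δ u) x) (u x) = ∫ x, ‖Δ u x‖ ^ 2 := by
  rw [← inner_lap]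
  simp only [real_inner_self_eq_norm_sq]

lemma inner_bilap_dil (u : 𝓢(E N, ℂ)) :
    ∫ x, inner ℝ (Δ (Δ u) x) (dil u x) = (2 - (N : ℝ) / 2) * ∫ x, ‖Δ u x‖ ^ 2 := by
  rw [← inner_lap, lapS_dil]
  have h : ∀ x, inner ℝ (Δ u x) (((2:ℝ) • Δ u + dil (Δ u) : 𝓢(E N, ℂ)) x) =
      2 * ‖Δ u x‖ ^ 2 + inner ℝ (Δ u x) (dil (Δ u) x) := by
    intro x
    rw [_root_.add_apply, _root_.smul_apply, inner_add_right, inner_smul_right,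
      real_inner_self_eq_norm_sq]
  simp only [h]
  have hi : Integrable (fun x => 2 * ‖Δ u x‖ ^ 2) := by
    simpa only [real_inner_self_eq_norm_sq] using (integrable_inner (Δ u) (Δ u)).const_mul 2
  rw [integral_add hi (integrable_inner _ _), integral_const_mul, inner_dil_self]
  ring

end Poho

/-- **Pohozaev-type norm identities for solutions of the stationary system.** -/
theorem pohozaev_norm_identities (N m : ℕ) (hN : 4 ≤ N) (p : ℝ) (hp : 1 < p)
    (a : Fin m → Fin m → ℝ) (hsymm : ∀ j k, a j k = a k j)
    (ψ : Fin m → SchwartzMap (EuclideanSpace ℝ (Fin N)) ℂ)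
    (hsol : ∀ j x, lap (lap (⇑(ψ j))) x + ψ j x =
      ∑ k, ((a j k * ‖ψ k x‖ ^ p * ‖ψ j x‖ ^ (p - 2) : ℝ) : ℂ) * ψ j x)
    (Q : ℝ) (hQ : Q = ∑ j, ∑ k, a j k * ∫ x, (‖ψ j x‖ * ‖ψ k x‖) ^ p) :
    (∑ j, ∫ x, ‖ψ j x‖ ^ 2) = (1 - (N : ℝ) / 4 + (N : ℝ) / (4 * p)) * Q ∧
    (∑ j, ∫ x, ‖lap (⇑(ψ j)) x‖ ^ 2) = ((N : ℝ) * (p - 1) / (4 * p)) * Q := by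
  have hp0 : p ≠ 0 := by linarith
  let F : Fin m → Poho.E N → ℝ := fun j x => ‖ψ j x‖ ^ p
  have hG : ∀ j, Poho.Good (F j) := fun j => Poho.Good.rpow (ψ j) hp
  have hGG : ∀ j k, Poho.Good (fun x => F j x * F k x) := fun j k => (hG j).mul (hG k)
  have hsol' : ∀ j x, (Δ (Δ (ψ j)) : 𝓢(Poho.E N, ℂ)) x + ψ j x =
      ∑ k, (a j k * ‖ψ k x‖ ^ p * ‖ψ j x‖ ^ (p - 2)) • ψ j x := by
    intro j x
    have := hsol j x
    rw [Poho.lap_eq, Poho.lap_eq] at this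
    rw [this]
    simp only [Complex.real_smul]
  have hlap : ∀ j, lap (⇑(ψ j)) = ⇑(Δ (ψ j) : 𝓢(Poho.E N, ℂ)) := fun j => Poho.lap_eq (ψ j)
  simp only [hlap]
  have hQ' : Q = ∑ j, ∑ k, a j k * ∫ x, F j x * F k x := by
    rw [hQ]
    simp only [F, Real.mul_rpow (norm_nonneg _) (norm_nonneg _)]
  -- first identity
  have h1 : ∀ j, (∫ x, ‖(Δ (ψ j) : 𝓢(Poho.E N, ℂ)) x‖ ^ 2) + ∫ x, ‖ψ j x‖ ^ 2 =
      ∑ k, a j k * ∫ x, F j x * F k x := by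
    intro j
    have e1 : ∀ x, inner ℝ ((Δ (Δ (ψ j)) : 𝓢(Poho.E N, ℂ)) x) (ψ j x) + inner ℝ (ψ j x) (ψ j x)
        = ∑ k, a j k * (F j x * F k x) := by
      intro x
      rw [← inner_add_left, hsol', sum_inner]
      refine Finset.sum_congr rfl fun k _ => ?_
      rw [real_inner_smul_left, real_inner_self_eq_norm_sq]
      have : ‖ψ j x‖ ^ (p - 2) * ‖ψ j x‖ ^ 2 = ‖ψ j x‖ ^ p := by
        rw [← Real.rpow_two, ← Real.rpow_add' (norm_nonneg _) (by linarith)]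
        ring_nf
      simp only [F]
      rw [mul_assoc, this]; ring
    have e2 := integral_congr_ae (μ := volume) (Filter.Eventually.of_forall e1)
    rw [integral_add (Poho.integrable_inner _ _) (Poho.integrable_inner _ _),
      Poho.inner_bilap_self, integral_finsetSum _ fun k _ => (hGG j k).int0.const_mul _] at e2
    simpa only [real_inner_self_eq_norm_sq, integral_const_mul] using e2
  -- second identity
  have h2 : ∀ j, (2 - (N : ℝ) / 2) * (∫ x, ‖(Δ (ψ j) : 𝓢(Poho.E N, ℂ)) x‖ ^ 2) +
      - ((N : ℝ) / 2) * ∫ x, ‖ψ j x‖ ^ 2 =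
      ∑ k, a j k / p * ∫ x, F k x * fderiv ℝ (F j) x x := by
    intro j
    have e1 : ∀ x, inner ℝ ((Δ (Δ (ψ j)) : 𝓢(Poho.E N, ℂ)) x) (Poho.dil (ψ j) x) +
        inner ℝ (ψ j x) (Poho.dil (ψ j) x)
        = ∑ k, a j k / p * (F k x * fderiv ℝ (F j) x x) := by
      intro x
      rw [← inner_add_left, hsol', sum_inner]
      refine Finset.sum_congr rfl fun k _ => ?_
      rw [real_inner_smul_left]
      simp only [F]
      rw [Poho.fderiv_rpow (ψ j) hp]
      field_simp
    have e2 := integral_congr_ae (μ := volume) (Filter.Eventually.of_forall e1)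
    rw [integral_add (Poho.integrable_inner _ _) (Poho.integrable_inner _ _),
      Poho.inner_bilap_dil, Poho.inner_dil_self,
      integral_finsetSum _ fun k _ => ((hG j).int_mul (hG k)).const_mul _] at e2
    simpa only [integral_const_mul] using e2
  have h3 : ∀ j k, (∫ x, F k x * fderiv ℝ (F j) x x) + (∫ x, F j x * fderiv ℝ (F k) x x) =
      - (N : ℝ) * ∫ x, F j x * F k x := by
    intro j k
    rw [← (hGG j k).integral, ← integral_add ((hG j).int_mul (hG k)) ((hG k).int_mul (hG j))]
    refine integral_congr_ae (Filter.Eventually.of_forall fun x => ?_)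
    simp only
    rw [fderiv_fun_mul ((hG j).diff x) ((hG k).diff x)]
    simp only [_root_.add_apply, _root_.smul_apply, smul_eq_mul]
    ring
  set A := ∑ j, ∫ x, ‖(Δ (ψ j) : 𝓢(Poho.E N, ℂ)) x‖ ^ 2 with hA
  set B := ∑ j, ∫ x, ‖ψ j x‖ ^ 2 with hB
  have s1 : A + B = Q := by
    rw [hA, hB, ← Finset.sum_add_distrib, hQ']
    exact Finset.sum_congr rfl fun j _ => h1 j
  have s2 : (2 - (N : ℝ) / 2) * A + - ((N : ℝ) / 2) * B =
      ∑ j, ∑ k, a j k / p * ∫ x, F k x * fderiv ℝ (F j) x x := by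
    rw [hA, hB, Finset.mul_sum, Finset.mul_sum, ← Finset.sum_add_distrib]
    exact Finset.sum_congr rfl fun j _ => h2 j
  have s3 : (∑ j, ∑ k, a j k / p * ∫ x, F k x * fderiv ℝ (F j) x x) =
      ∑ j, ∑ k, a j k / p * ∫ x, F j x * fderiv ℝ (F k) x x := by
    rw [Finset.sum_comm]
    refine Finset.sum_congr rfl fun j _ => Finset.sum_congr rfl fun k _ => ?_
    rw [hsymm k j]
  have s4 : (∑ j, ∑ k, a j k / p * ∫ x, F k x * fderiv ℝ (F j) x x) +
      (∑ j, ∑ k, a j k / p * ∫ x, F j x * fderiv ℝ (F k) x x) = - (N : ℝ) / p * Q := by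
    rw [hQ', ← Finset.sum_add_distrib, Finset.mul_sum]
    refine Finset.sum_congr rfl fun j _ => ?_
    rw [← Finset.sum_add_distrib, Finset.mul_sum]
    refine Finset.sum_congr rfl fun k _ => ?_
    rw [← mul_add, h3]
    ring
  rw [← s3, ← s2] at s4
  have hAQ : A = ((N : ℝ) * (p - 1) / (4 * p)) * Q := by
    have hB' : B = Q - A := by linarith
    rw [hB'] at s4
    have : A = (N : ℝ) / 4 * Q + (- (N : ℝ) / p * Q) / 4 := by linarith
    rw [this]
    field_simp
    ring
  refine ⟨?_, hAQ⟩
  have : B = Q - A := by linarith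
  rw [this, hAQ]
  field_simp
  ring
end
end

section
/- Pohozaev identities for the scalar ground state equation: Let N ≥ 5 be an integer and 1 < p < N/(N-4). Suppose w : ℝ^N → ℝ is a Schwartz function solving Δ²w + w = |w|^{2p-2} w pointwise on ℝ^N. Then ‖Δw‖² = (N(p-1)/(N - p(N-4))) ‖w‖² and ∫_{ℝ^N} |w|^{2p} dx = (4p/(N - p(N-4))) ‖w‖². -/
open MeasureTheory Finset

noncomputable section

open SchwartzMap LineDeriv

/-- coordinate direction -/
def ee {N : ℕ} (i : Fin N) : EuclideanSpace ℝ (Fin N) := EuclideanSpace.single i (1 : ℝ)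

lemma coord_tg {N : ℕ} (i : Fin N) :
    Function.HasTemperateGrowth (fun x : EuclideanSpace ℝ (Fin N) => x i) :=
  (EuclideanSpace.proj i : EuclideanSpace ℝ (Fin N) →L[ℝ] ℝ).hasTemperateGrowth

/-- multiplication by a coordinate -/
def XX {N : ℕ} (i : Fin N) (f : SchwartzMap (EuclideanSpace ℝ (Fin N)) ℝ) :
    SchwartzMap (EuclideanSpace ℝ (Fin N)) ℝ :=
  smulLeftCLM ℝ (fun x : EuclideanSpace ℝ (Fin N) => x i) f

lemma XX_apply {N : ℕ} (i : Fin N) (f : SchwartzMap (EuclideanSpace ℝ (Fin N)) ℝ)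
    (x : EuclideanSpace ℝ (Fin N)) : XX i f x = x i * f x := by
  rw [XX, smulLeftCLM_apply_apply (coord_tg i), smul_eq_mul]

lemma XX_add {N : ℕ} (i : Fin N) (f g : SchwartzMap (EuclideanSpace ℝ (Fin N)) ℝ) :
    XX i (f + g) = XX i f + XX i g := map_add _ _ _

lemma XX_sum {N : ℕ} {ι : Type*} (s : Finset ι) (i : Fin N)
    (f : ι → SchwartzMap (EuclideanSpace ℝ (Fin N)) ℝ) :
    XX i (∑ j ∈ s, f j) = ∑ j ∈ s, XX i (f j) := map_sum _ _ _

/-- the Schwartz Laplacian -/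
def lapS {N : ℕ} (f : SchwartzMap (EuclideanSpace ℝ (Fin N)) ℝ) :
    SchwartzMap (EuclideanSpace ℝ (Fin N)) ℝ := ∑ i : Fin N, ∂_{ee i} (∂_{ee i} f)

/-- the dilation field -/
def MM {N : ℕ} (f : SchwartzMap (EuclideanSpace ℝ (Fin N)) ℝ) :
    SchwartzMap (EuclideanSpace ℝ (Fin N)) ℝ := ∑ i : Fin N, XX i (∂_{ee i} f)

lemma MM_apply {N : ℕ} (f : SchwartzMap (EuclideanSpace ℝ (Fin N)) ℝ)
    (x : EuclideanSpace ℝ (Fin N)) : MM f x = ∑ i : Fin N, x i * fderiv ℝ f x (ee i) := by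
  simp [MM, _root_.sum_apply, XX_apply, lineDerivOp_apply_eq_fderiv]

lemma lap_eq {N : ℕ} (f : SchwartzMap (EuclideanSpace ℝ (Fin N)) ℝ) : lap (⇑f) = ⇑(lapS f) := by
  funext x
  simp only [lap, lapS, _root_.sum_apply]
  refine Finset.sum_congr rfl fun i _ => ?_
  rw [← iteratedLineDerivOp_eq_iteratedFDeriv]
  rfl

lemma deriv_comm {N : ℕ} (f : SchwartzMap (EuclideanSpace ℝ (Fin N)) ℝ)
    (u v : EuclideanSpace ℝ (Fin N)) : ∂_{u} (∂_{v} f) = ∂_{v} (∂_{u} f) := by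
  ext x
  have hs : IsSymmSndFDerivAt ℝ (⇑f) x :=
    (f.smooth 2).contDiffAt.isSymmSndFDerivAt (by simp)
  have hd : DifferentiableAt ℝ (fderiv ℝ (⇑f)) x := (fderivCLM ℝ _ _ f).differentiableAt
  have key : ∀ a b : EuclideanSpace ℝ (Fin N),
      ∂_{a} (∂_{b} f) x = fderiv ℝ (fderiv ℝ (⇑f)) x a b := by
    intro a b
    rw [lineDerivOp_apply_eq_fderiv]
    have : ⇑(∂_{b} f : SchwartzMap (EuclideanSpace ℝ (Fin N)) ℝ) = fun y => fderiv ℝ (⇑f) y b := rfl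
    rw [this, fderiv_clm_apply hd (by fun_prop)]
    simp
  rw [key, key, hs.eq]

lemma deriv_XX {N : ℕ} (i j : Fin N) (f : SchwartzMap (EuclideanSpace ℝ (Fin N)) ℝ) :
    ∂_{ee j} (XX i f) = (if i = j then (1 : ℝ) else 0) • f + XX i (∂_{ee j} f) := by
  ext x
  rw [lineDerivOp_apply_eq_fderiv]
  have h1 : (⇑(XX i f)) = fun y : EuclideanSpace ℝ (Fin N) =>
    (EuclideanSpace.proj i : EuclideanSpace ℝ (Fin N) →L[ℝ] ℝ) y * f y := by
    funext y; rw [XX_apply]; rfl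
  rw [h1, fderiv_fun_mul (ContinuousLinearMap.differentiableAt _) f.differentiableAt,
    ContinuousLinearMap.fderiv]
  simp only [_root_.add_apply, _root_.smul_apply, XX_apply,
    lineDerivOp_apply_eq_fderiv]
  simp [ee]
  split_ifs <;> ring

lemma lapS_MM {N : ℕ} (f : SchwartzMap (EuclideanSpace ℝ (Fin N)) ℝ) :
    lapS (MM f) = (2 : ℝ) • lapS f + MM (lapS f) := by
  have h : ∀ i j : Fin N, ∂_{ee j} (∂_{ee j} (XX i (∂_{ee i} f))) =
      (if i = j then (2 : ℝ) else 0) • ∂_{ee j} (∂_{ee i} f)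
        + XX i (∂_{ee i} (∂_{ee j} (∂_{ee j} f))) := by
    intro i j
    rw [deriv_XX, lineDerivOp_add, lineDerivOp_smul, deriv_XX, deriv_comm f (ee j) (ee i),
      deriv_comm (∂_{ee j} f) (ee j) (ee i), ← add_assoc, ← add_smul]
    congr 2
    split_ifs <;> norm_num
  simp only [lapS, MM, lineDerivOp_sum, h, Finset.sum_add_distrib, XX_sum]
  congr 1
  · simp [Finset.smul_sum]
  · rw [Finset.sum_comm]

lemma integral_deriv_zero {N : ℕ} (f : SchwartzMap (EuclideanSpace ℝ (Fin N)) ℝ)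
    (v : EuclideanSpace ℝ (Fin N)) : ∫ x, ∂_{v} f x = 0 := by
  have := integral_mul_fderiv_eq_neg_fderiv_mul_of_integrable (μ := volume)
    (f := fun _ : EuclideanSpace ℝ (Fin N) => (1 : ℝ)) (g := ⇑f) (v := v)
    (by simp) (by simpa using (∂_{v} f).integrable) (by simpa using f.integrable)
    (by intros; fun_prop) (fun x _ => f.differentiableAt)
  simpa [lineDerivOp_apply_eq_fderiv] using this

lemma integral_MM {N : ℕ} (f : SchwartzMap (EuclideanSpace ℝ (Fin N)) ℝ) :
    ∫ x, MM f x = - (N : ℝ) * ∫ x, f x := by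
  have h : ∀ i : Fin N, ∫ x, XX i (∂_{ee i} f) x = - ∫ x, f x := by
    intro i
    have h0 := integral_deriv_zero (XX i f) (ee i)
    rw [deriv_XX] at h0
    simp only [if_true, one_smul, _root_.add_apply] at h0
    rw [integral_add f.integrable (SchwartzMap.integrable _)] at h0
    linarith
  simp only [MM, _root_.sum_apply]
  rw [integral_finsetSum _ (fun i _ => SchwartzMap.integrable _)]
  simp [h]

/-- product of Schwartz functions -/
def mulS {N : ℕ} (f g : SchwartzMap (EuclideanSpace ℝ (Fin N)) ℝ) :
    SchwartzMap (EuclideanSpace ℝ (Fin N)) ℝ := pairing (ContinuousLinearMap.mul ℝ ℝ) f g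

lemma mulS_apply {N : ℕ} (f g : SchwartzMap (EuclideanSpace ℝ (Fin N)) ℝ)
    (x : EuclideanSpace ℝ (Fin N)) : mulS f g x = f x * g x := rfl

lemma integral_self_MM {N : ℕ} (u : SchwartzMap (EuclideanSpace ℝ (Fin N)) ℝ) :
    2 * ∫ x, u x * MM u x = - (N : ℝ) * ∫ x, u x ^ 2 := by
  have h := integral_MM (mulS u u)
  have h1 : ∀ x, MM (mulS u u) x = 2 * (u x * MM u x) := by
    intro x
    have hc : (⇑(mulS u u)) = fun y => u y * u y := rfl
    rw [MM_apply, MM_apply, hc, fderiv_fun_mul u.differentiableAt u.differentiableAt,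
      Finset.mul_sum, Finset.mul_sum]
    refine Finset.sum_congr rfl fun i _ => ?_
    simp
    ring
  simp only [h1, mulS_apply] at h
  rw [integral_const_mul] at h
  simpa [sq] using h

/-- **Pohozaev identities for the scalar ground state equation** `Δ²w + w = |w|^{2p-2} w`. -/
theorem scalar_pohozaev_identities (N : ℕ) (hN : 5 ≤ N) (p : ℝ) (hp : 1 < p)
    (hpN : p < (N : ℝ) / ((N : ℝ) - 4))
    (w : SchwartzMap (EuclideanSpace ℝ (Fin N)) ℝ)
    (hsol : ∀ x, lap (lap (⇑w)) x + w x = |w x| ^ (2 * p - 2) * w x) :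
    (∫ x, ‖lap (⇑w) x‖ ^ 2) =
      ((N : ℝ) * (p - 1) / ((N : ℝ) - p * ((N : ℝ) - 4))) * ∫ x, ‖w x‖ ^ 2 ∧
    (∫ x, |w x| ^ (2 * p)) =
      (4 * p / ((N : ℝ) - p * ((N : ℝ) - 4))) * ∫ x, ‖w x‖ ^ 2 := by
  have hN' : (5 : ℝ) ≤ N := by exact_mod_cast hN
  have hD : 0 < (N : ℝ) - p * ((N : ℝ) - 4) := by
    rw [lt_div_iff₀ (by linarith)] at hpN
    linarith
  rw [lap_eq w] at *
  rw [lap_eq (lapS w)] at hsol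
  set u := lapS w with hu
  set f := lapS u + w with hf
  have hfx : ∀ x, f x = |w x| ^ (2 * p - 2) * w x := fun x => by
    rw [← hsol x]; rfl
  have hG : ∀ x, |w x| ^ (2 * p) = mulS f w x := by
    intro x
    rw [mulS_apply, hfx]
    rcases eq_or_ne (w x) 0 with h | h
    · rw [h, abs_zero, Real.zero_rpow (by linarith)]; ring
    · rw [mul_assoc, ← sq, ← sq_abs, ← Real.rpow_natCast, ← Real.rpow_add (abs_pos.mpr h)]
      norm_num
  have hsymm : ∀ g : SchwartzMap (EuclideanSpace ℝ (Fin N)) ℝ,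
      ∫ x, lapS u x * g x = ∫ x, u x * lapS g x := by
    intro g
    have hΔ : ∀ h : SchwartzMap (EuclideanSpace ℝ (Fin N)) ℝ, lapS h = Laplacian.laplacian h := by
      intro h
      rw [laplacian_eq_sum (EuclideanSpace.basisFun (Fin N) ℝ) h]
      simp [lapS, ee]
    rw [hΔ, hΔ, integral_mul_laplacian_right_eq_left]
  have int1 : ∀ a b : SchwartzMap (EuclideanSpace ℝ (Fin N)) ℝ,
      Integrable (fun x => a x * b x) := fun a b => (mulS a b).integrable
  -- first identity
  have e1 : ∫ x, mulS f w x = (∫ x, u x ^ 2) + ∫ x, w x ^ 2 := by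
    have : ∀ x, mulS f w x = lapS u x * w x + w x * w x := by
      intro x; rw [mulS_apply, hf, _root_.add_apply]; ring
    simp only [this]
    rw [integral_add (int1 _ _) (int1 _ _), hsymm]
    simp [sq, hu]
  -- second identity
  have e2 : ∫ x, f x * MM w x = (∫ x, u x * (2 * u x + MM u x)) + ∫ x, w x * MM w x := by
    have : ∀ x, f x * MM w x = lapS u x * MM w x + w x * MM w x := by
      intro x; rw [hf, _root_.add_apply]; ring
    simp only [this]
    rw [integral_add (int1 _ _) (int1 _ _), hsymm, lapS_MM]
    rfl
  have e3 : (∫ x, u x * (2 * u x + MM u x)) = 2 * (∫ x, u x ^ 2) + ∫ x, u x * MM u x := by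
    rw [← integral_const_mul, ← integral_add _ (int1 _ _)]
    · congr 1; funext x; ring
    · simpa [sq] using (int1 u u).const_mul 2
  have e4 : 2 * p * ∫ x, f x * MM w x = - (N : ℝ) * ∫ x, mulS f w x := by
    rw [← integral_MM, ← integral_const_mul]
    congr 1
    funext x
    have hc : (⇑(mulS f w)) = fun y => |w y| ^ (2 * p) := by funext y; rw [hG]
    have hd := (hasDerivAt_abs_rpow (w x) (p := 2 * p) (by linarith)).comp_hasFDerivAt x
      (w.hasFDerivAt x)
    have hd' : fderiv ℝ (⇑(mulS f w)) x =
        (2 * p * |w x| ^ (2 * p - 2) * w x) • fderiv ℝ (⇑w) x := by rw [hc]; exact hd.fderiv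
    rw [MM_apply, MM_apply, hd', Finset.mul_sum, Finset.mul_sum]
    refine Finset.sum_congr rfl fun i _ => ?_
    rw [hfx]
    simp
    ring
  have e5 := integral_self_MM u
  have e6 := integral_self_MM w
  simp only [Real.norm_eq_abs, sq_abs, hG]
  set A := ∫ x, u x ^ 2
  set B := ∫ x, w x ^ 2
  set C := ∫ x, mulS f w x
  have e7 : p * ((4 - N) * A - N * B) = - N * C := by
    rw [← e4, e2, e3]; linear_combination -p * e5 - p * e6
  constructor
  · rw [div_mul_eq_mul_div, eq_div_iff hD.ne']
    linear_combination e7 - N * e1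
  · rw [div_mul_eq_mul_div, eq_div_iff hD.ne']
    linear_combination e7 + p * (4 - N) * e1
end
end

section
/- Solvability of the coupling system in the cubic case: Let m ≥ 2 be an integer, let μ_1,…,μ_m > 0, and let β > 0 satisfy either β < min{μ_1,…,μ_m} or β > max{μ_1,…,μ_m}. Then there exist real numbers c_1,…,c_m with c_j > 0 for every j such that μ_j c_j + β Σ_{k≠j} c_k = 1 for each j = 1,…,m. -/
open Finset

/-- **Solvability of the coupling system in the cubic case**: if `β > 0` lies below
`min μ_j` or above `max μ_j`, the linear system `μ_j c_j + β ∑_{k≠j} c_k = 1`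
has a solution with all components positive. -/
theorem coupling_system_solvable (m : ℕ) (hm : 2 ≤ m)
    (μ : Fin m → ℝ) (hμ : ∀ j, 0 < μ j) (β : ℝ) (hβ : 0 < β)
    (hsep : (∀ j, β < μ j) ∨ (∀ j, μ j < β)) :
    ∃ c : Fin m → ℝ, (∀ j, 0 < c j) ∧
      ∀ j, μ j * c j + β * ∑ k ∈ Finset.univ.erase j, c k = 1 := by
  have key : ∀ t T : ℝ, T = ∑ k, (μ k - β)⁻¹ → t * (1 + β * T) = 1 →
      (∀ j, μ j - β ≠ 0) → (∀ j, 0 < t * (μ j - β)⁻¹) →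
      ∃ c : Fin m → ℝ, (∀ j, 0 < c j) ∧
        ∀ j, μ j * c j + β * ∑ k ∈ Finset.univ.erase j, c k = 1 := by
    intro t T hT ht hne hpos
    refine ⟨fun j => t * (μ j - β)⁻¹, hpos, fun j => ?_⟩
    have h1 := Finset.add_sum_erase Finset.univ (fun j => t * (μ j - β)⁻¹) (Finset.mem_univ j)
    have h2 : ∑ k, t * (μ k - β)⁻¹ = t * T := by rw [hT, Finset.mul_sum]
    have h3 : (μ j - β) * (μ j - β)⁻¹ = 1 := mul_inv_cancel₀ (hne j)
    simp only at h1 ⊢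
    rw [h2] at h1
    linear_combination β * h1 + t * h3 + ht
  rcases hsep with h | h
  · have hp : ∀ j, 0 < (μ j - β)⁻¹ := fun j => inv_pos.mpr (sub_pos.mpr (h j))
    have hT : 0 ≤ ∑ k, (μ k - β)⁻¹ := Finset.sum_nonneg fun j _ => (hp j).le
    have hD : 0 < 1 + β * ∑ k, (μ k - β)⁻¹ := by positivity
    exact key _ _ rfl (inv_mul_cancel₀ hD.ne') (fun j => (sub_pos.mpr (h j)).ne')
      fun j => mul_pos (inv_pos.mpr hD) (hp j)
  · have hp : ∀ j, (μ j - β)⁻¹ < 0 := fun j => inv_lt_zero.mpr (sub_neg.mpr (h j))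
    have hD : 1 + β * ∑ k, (μ k - β)⁻¹ < 0 := by
      let j : Fin m := ⟨0, by omega⟩
      have h1 := Finset.add_sum_erase Finset.univ (fun j => (μ j - β)⁻¹) (Finset.mem_univ j)
      have h2 : ∑ k ∈ Finset.univ.erase j, (μ k - β)⁻¹ ≤ 0 :=
        Finset.sum_nonpos fun k _ => (hp k).le
      have h3 : (μ j - β) * (μ j - β)⁻¹ = 1 := mul_inv_cancel₀ (sub_neg.mpr (h j)).ne
      have h4 := mul_neg_of_pos_of_neg (hμ j) (hp j)
      rw [← h1]
      nlinarith [mul_nonneg hβ.le (neg_nonneg.mpr h2)]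
    exact key _ _ rfl (inv_mul_cancel₀ hD.ne) (fun j => (sub_neg.mpr (h j)).ne)
      fun j => mul_pos_of_neg_of_neg (inv_lt_zero.mpr hD) (hp j)
end
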